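/- Subject reduction for SHOπ: if P is a well-formed SHOπ (soft) process in the empty context (⊢ P) and P → Q, then Q is well-formed in the empty context (⊢ Q). -/

import Mathlib

/-! Reduction never goes under a binder or inside a box, so a redex occurring in a process that is
well formed in the empty context passes a value `U` that is itself well formed in the empty
context. Such a `U` is invariant under lifting (`liftV_closed`) and is well formed in every context
of §-marked variables (`WfV.weaken`). It can therefore be substituted for a variable carrying any
marker, at any depth, without disturbing the rest of the context: this is the substitution lemma
`WfP.subst`. The three ways of marking a bound variable are thus handled uniformly.

Structural congruence preserves well-formation in both directions and in every context
(`SCP.wf_iff`), because context splitting is commutative and associative and because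
well-formation does not depend on channel names (`wfP_ch`). Subject reduction follows by induction
on the derivation of the reduction. -/


/-! Syntax of LHOπ / SHOπ processes and values (variables in de Bruijn style,
channels as names). -/

mutual
inductive Val : Type
  | star : Val
  | var : ℕ → Val
  | lam : Proc → Val
  | blam : Proc → Val
  | bang : Val → Val
inductive Proc : Type
  | nil : Proc
  | par : Proc → Proc → Proc
  | inp : ℕ → Proc → Proc
  | binp : ℕ → Proc → Proc
  | out : ℕ → Val → Proc → Proc
  | nu : ℕ → Proc → Proc
  | app : Val → Val → Proc
end

/-! Lifting and capture-avoiding substitution. -/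

mutual
def liftV (c : ℕ) : Val → Val
  | .star => .star
  | .var x => if x < c then .var x else .var (x + 1)
  | .lam P => .lam (liftP (c + 1) P)
  | .blam P => .blam (liftP (c + 1) P)
  | .bang V => .bang (liftV c V)
def liftP (c : ℕ) : Proc → Proc
  | .nil => .nil
  | .par P Q => .par (liftP c P) (liftP c Q)
  | .inp a P => .inp a (liftP (c + 1) P)
  | .binp a P => .binp a (liftP (c + 1) P)
  | .out a V P => .out a (liftV c V) (liftP c P)
  | .nu a P => .nu a (liftP c P)
  | .app V W => .app (liftV c V) (liftV c W)
end

mutual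
def substV (U : Val) (k : ℕ) : Val → Val
  | .star => .star
  | .var x => if x = k then U else if x < k then .var x else .var (x - 1)
  | .lam P => .lam (substP (liftV 0 U) (k + 1) P)
  | .blam P => .blam (substP (liftV 0 U) (k + 1) P)
  | .bang V => .bang (substV U k V)
def substP (U : Val) (k : ℕ) : Proc → Proc
  | .nil => .nil
  | .par P Q => .par (substP U k P) (substP U k Q)
  | .inp a P => .inp a (substP (liftV 0 U) (k + 1) P)
  | .binp a P => .binp a (substP (liftV 0 U) (k + 1) P)
  | .out a V P => .out a (substV U k V) (substP U k P)
  | .nu a P => .nu a (substP U k P)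
  | .app V W => .app (substV U k V) (substV U k W)
end

/-! Free channels and channel renaming (for α-conversion of restrictions). -/

mutual
def fcV : Val → Finset ℕ
  | .star => ∅
  | .var _ => ∅
  | .lam P => fcP P
  | .blam P => fcP P
  | .bang V => fcV V
def fcP : Proc → Finset ℕ
  | .nil => ∅
  | .par P Q => fcP P ∪ fcP Q
  | .inp a P => insert a (fcP P)
  | .binp a P => insert a (fcP P)
  | .out a V P => insert a (fcV V ∪ fcP P)
  | .nu a P => fcP P \ {a}
  | .app V W => fcV V ∪ fcV W
end

mutual
def chV (a b : ℕ) : Val → Val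
  | .star => .star
  | .var x => .var x
  | .lam P => .lam (chP a b P)
  | .blam P => .blam (chP a b P)
  | .bang V => .bang (chV a b V)
def chP (a b : ℕ) : Proc → Proc
  | .nil => .nil
  | .par P Q => .par (chP a b P) (chP a b Q)
  | .inp c P => .inp (if c = a then b else c) (chP a b P)
  | .binp c P => .binp (if c = a then b else c) (chP a b P)
  | .out c V P => .out (if c = a then b else c) (chV a b V) (chP a b P)
  | .nu c P => if c = a then .nu c P else .nu c (chP a b P)
  | .app V W => .app (chV a b V) (chV a b W)
end

/-! Structural congruence: the smallest congruence containing α-equivalence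
(for channel restrictions; α-equivalence of variables is syntactic identity in
de Bruijn style), associativity and commutativity of parallel composition,
exchange of restrictions, and scope extrusion.  No garbage-collection laws. -/

mutual
inductive SCV : Val → Val → Prop
  | refl (V) : SCV V V
  | symm : SCV V W → SCV W V
  | trans : SCV U V → SCV V W → SCV U W
  | lam : SCP P Q → SCV (.lam P) (.lam Q)
  | blam : SCP P Q → SCV (.blam P) (.blam Q)
  | bang : SCV V W → SCV (.bang V) (.bang W)
inductive SCP : Proc → Proc → Prop
  | refl (P) : SCP P P
  | symm : SCP P Q → SCP Q P
  | trans : SCP P Q → SCP Q R → SCP P R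
  | par : SCP P P' → SCP Q Q' → SCP (.par P Q) (.par P' Q')
  | inp : SCP P Q → SCP (.inp a P) (.inp a Q)
  | binp : SCP P Q → SCP (.binp a P) (.binp a Q)
  | out : SCV V W → SCP P Q → SCP (.out a V P) (.out a W Q)
  | nu : SCP P Q → SCP (.nu a P) (.nu a Q)
  | app : SCV V V' → SCV W W' → SCP (.app V W) (.app V' W')
  | assoc : SCP (.par P (.par Q R)) (.par (.par P Q) R)
  | comm : SCP (.par P Q) (.par Q P)
  | nuswap : SCP (.nu a (.nu b P)) (.nu b (.nu a P))
  | extrude : a ∉ fcP Q → SCP (.nu a (.par P Q)) (.par (.nu a P) Q)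
  | alpha : b ∉ fcP P → SCP (.nu a P) (.nu b (chP a b P))
end

/-! Reduction. -/

inductive Red : Proc → Proc → Prop
  | comm : Red (.par (.out a V P) (.inp a Q)) (.par P (substP V 0 Q))
  | bcomm : Red (.par (.out a (.bang V) P) (.binp a Q)) (.par P (substP V 0 Q))
  | beta : Red (.app (.lam P) V) (substP V 0 P)
  | bbeta : Red (.app (.blam P) (.bang V)) (substP V 0 P)
  | parL : Red P Q → Red (.par P R) (.par Q R)
  | res : Red P Q → Red (.nu a P) (.nu a Q)
  | struct : SCP P P' → Red P' Q' → SCP Q' Q → Red P Q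

/-- `m`-step reduction. -/
inductive RedN : ℕ → Proc → Proc → Prop
  | zero : RedN 0 P P
  | succ : Red P Q → RedN n Q R → RedN (n + 1) P R

/-! SHOπ well-formation.  A context entry is `none` (absent) or a marker:
linear `x`, nonlinear `!x`, or nonlinear `§x`. -/

inductive SMark : Type
  | lin : SMark
  | bang : SMark
  | para : SMark
deriving DecidableEq

abbrev Ctx := List (Option SMark)

/-- Contexts made only of §-marked (or absent) variables: these admit
weakening. -/
def ParaOnly (Γ : Ctx) : Prop := ∀ e ∈ Γ, e = none ∨ e = some .para

/-- Splitting one context entry between the two premises of a binary rule: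
linear and !-variables go to exactly one premise, §-variables may be shared
(implicit contraction). -/
inductive SplitE : Option SMark → Option SMark → Option SMark → Prop
  | none : SplitE none none none
  | linL : SplitE (some .lin) (some .lin) none
  | linR : SplitE (some .lin) none (some .lin)
  | bangL : SplitE (some .bang) (some .bang) none
  | bangR : SplitE (some .bang) none (some .bang)
  | paraL : SplitE (some .para) (some .para) none
  | paraR : SplitE (some .para) none (some .para)
  | paraB : SplitE (some .para) (some .para) (some .para)

inductive Split : Ctx → Ctx → Ctx → Prop
  | nil : Split [] [] []
  | cons : SplitE e e₁ e₂ → Split Γ Γ₁ Γ₂ → Split (e :: Γ) (e₁ :: Γ₁) (e₂ :: Γ₂)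

/-- Entry-wise relation between the context of `V` and the context of `!V`:
linear variables become !-marked ones, and weakening by §-variables is
allowed.  §- and !-variables may not appear inside a !-box. -/
inductive BangE : Option SMark → Option SMark → Prop
  | lin : BangE (some .lin) (some .bang)
  | none : BangE none none
  | para : BangE none (some .para)

inductive BangCtx : Ctx → Ctx → Prop
  | nil : BangCtx [] []
  | cons : BangE e e' → BangCtx Γ Γ' → BangCtx (e :: Γ) (e' :: Γ')

mutual
inductive WfV : Ctx → Val → Prop
  | star : ParaOnly Γ → WfV Γ .star
  | varLin : ParaOnly Γ → WfV (some .lin :: Γ) (.var 0)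
  | varPara : ParaOnly Γ → WfV (some .para :: Γ) (.var 0)
  | varThere : (e = none ∨ e = some SMark.para) → WfV Γ (.var x) →
      WfV (e :: Γ) (.var (x + 1))
  | lam : WfP (some .lin :: Γ) P → WfV Γ (.lam P)
  | blamBang : WfP (some .bang :: Γ) P → WfV Γ (.blam P)
  | blamPara : WfP (some .para :: Γ) P → WfV Γ (.blam P)
  | bang : BangCtx Γ Δ → WfV Γ V → WfV Δ (.bang V)
inductive WfP : Ctx → Proc → Prop
  | nil : ParaOnly Γ → WfP Γ .nil
  | par : Split Γ Γ₁ Γ₂ → WfP Γ₁ P → WfP Γ₂ Q → WfP Γ (.par P Q)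
  | inp : WfP (some .lin :: Γ) P → WfP Γ (.inp a P)
  | binpBang : WfP (some .bang :: Γ) P → WfP Γ (.binp a P)
  | binpPara : WfP (some .para :: Γ) P → WfP Γ (.binp a P)
  | out : Split Γ Γ₁ Γ₂ → WfV Γ₁ V → WfP Γ₂ P → WfP Γ (.out a V P)
  | nu : WfP Γ P → WfP Γ (.nu a P)
  | app : Split Γ Γ₁ Γ₂ → WfV Γ₁ V → WfV Γ₂ W → WfP Γ (.app V W)
end

/-! Measures: size, box depth, free occurrences, duplicability factor,
parametrized weight, weight. -/

mutual
def sizeV : Val → ℕ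
  | .star => 1
  | .var _ => 1
  | .lam P => sizeP P + 1
  | .blam P => sizeP P + 1
  | .bang V => sizeV V + 1
def sizeP : Proc → ℕ
  | .nil => 1
  | .par P Q => sizeP P + sizeP Q + 1
  | .inp _ P => sizeP P + 1
  | .binp _ P => sizeP P + 1
  | .out _ V P => sizeV V + sizeP P + 1
  | .nu _ P => sizeP P + 1
  | .app V W => sizeV V + sizeV W + 1
end

mutual
def bdV : Val → ℕ
  | .star => 0
  | .var _ => 0
  | .lam P => bdP P
  | .blam P => bdP P
  | .bang V => bdV V + 1
def bdP : Proc → ℕ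
  | .nil => 0
  | .par P Q => max (bdP P) (bdP Q)
  | .inp _ P => bdP P
  | .binp _ P => bdP P
  | .out _ V P => max (bdV V) (bdP P)
  | .nu _ P => bdP P
  | .app V W => max (bdV V) (bdV W)
end

-- Number of free occurrences of the variable (de Bruijn index) `k`.
mutual
def foV (k : ℕ) : Val → ℕ
  | .star => 0
  | .var x => if x = k then 1 else 0
  | .lam P => foP (k + 1) P
  | .blam P => foP (k + 1) P
  | .bang V => foV k V
def foP (k : ℕ) : Proc → ℕ
  | .nil => 0
  | .par P Q => foP k P + foP k Q
  | .inp _ P => foP (k + 1) P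
  | .binp _ P => foP (k + 1) P
  | .out _ V P => foV k V + foP k P
  | .nu _ P => foP k P
  | .app V W => foV k V + foV k W
end

-- Duplicability factor.
mutual
def dV : Val → ℕ
  | .star => 1
  | .var _ => 1
  | .lam P => max (dP P) (foP 0 P)
  | .blam P => max (dP P) (foP 0 P)
  | .bang V => dV V
def dP : Proc → ℕ
  | .nil => 1
  | .par P Q => max (dP P) (dP Q)
  | .inp _ P => max (dP P) (foP 0 P)
  | .binp _ P => max (dP P) (foP 0 P)
  | .out _ V P => max (dV V) (dP P)
  | .nu _ P => dP P
  | .app V W => max (dV V) (dV W)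
end

-- `n`-parametrized weight.
mutual
def wV (n : ℕ) : Val → ℕ
  | .star => 1
  | .var _ => 1
  | .lam P => wP n P
  | .blam P => wP n P
  | .bang V => n * wV n V + 1
def wP (n : ℕ) : Proc → ℕ
  | .nil => 1
  | .par P Q => wP n P + wP n Q + 1
  | .inp _ P => wP n P + 1
  | .binp _ P => wP n P + 1
  | .out _ V P => wV n V + wP n P
  | .nu _ P => wP n P
  | .app V W => wV n V + wV n W + 1
end

/-- The weight of a process. -/
def weightP (P : Proc) : ℕ := wP (dP P) P
/-- The weight of a value. -/
def weightV (V : Val) : ℕ := wV (dV V) V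


theorem ParaOnly.cons {e : Option SMark} {Γ : Ctx} (he : e = none ∨ e = some .para)
    (h : ParaOnly Γ) : ParaOnly (e :: Γ) := by
  intro x hx
  rcases List.mem_cons.1 hx with rfl | hx
  · exact he
  · exact h x hx

theorem ParaOnly.append {Γ Δ : Ctx} (h : ParaOnly Γ) (h' : ParaOnly Δ) :
    ParaOnly (Γ ++ Δ) := by
  intro x hx
  rcases List.mem_append.1 hx with hx | hx
  · exact h x hx
  · exact h' x hx

theorem ParaOnly.eraseIdx {Γ : Ctx} (h : ParaOnly Γ) (k : ℕ) : ParaOnly (Γ.eraseIdx k) :=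
  fun x hx => h x (List.mem_of_mem_eraseIdx hx)

/-! ### Context splitting -/

theorem SplitE.comm {e e₁ e₂ : Option SMark} (h : SplitE e e₁ e₂) : SplitE e e₂ e₁ := by
  cases h <;> constructor

theorem Split.comm {Γ Γ₁ Γ₂ : Ctx} (h : Split Γ Γ₁ Γ₂) : Split Γ Γ₂ Γ₁ := by
  induction h with
  | nil => exact .nil
  | cons h _ ih => exact .cons h.comm ih

theorem SplitE.assoc {e e₁ e' e₂ e₃ : Option SMark} (h : SplitE e e₁ e') (h' : SplitE e' e₂ e₃) :
    ∃ d, SplitE e d e₃ ∧ SplitE d e₁ e₂ := by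
  cases h <;> cases h' <;>
    first
    | (refine ⟨Option.none, ?_, ?_⟩ <;> constructor)
    | (refine ⟨some .lin, ?_, ?_⟩ <;> constructor)
    | (refine ⟨some .bang, ?_, ?_⟩ <;> constructor)
    | (refine ⟨some .para, ?_, ?_⟩ <;> constructor)

theorem Split.assoc {Γ Γ₁ Γ' Γ₂ Γ₃ : Ctx} (h : Split Γ Γ₁ Γ') (h' : Split Γ' Γ₂ Γ₃) :
    ∃ Δ, Split Γ Δ Γ₃ ∧ Split Δ Γ₁ Γ₂ := by
  induction h generalizing Γ₂ Γ₃ with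
  | nil =>
    cases h'
    exact ⟨[], .nil, .nil⟩
  | cons h _ ih =>
    cases h' with
    | cons he hΓ =>
      obtain ⟨d, h1, h2⟩ := h.assoc he
      obtain ⟨Δ, h3, h4⟩ := ih hΓ
      exact ⟨d :: Δ, .cons h1 h3, .cons h2 h4⟩

theorem Split.length_eq {Γ Γ₁ Γ₂ : Ctx} (h : Split Γ Γ₁ Γ₂) :
    Γ₁.length = Γ.length ∧ Γ₂.length = Γ.length := by
  induction h with
  | nil => simp
  | cons _ _ ih => simp [ih.1, ih.2]

theorem Split.eraseIdx {Γ Γ₁ Γ₂ : Ctx} (h : Split Γ Γ₁ Γ₂) (k : ℕ) :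
    Split (Γ.eraseIdx k) (Γ₁.eraseIdx k) (Γ₂.eraseIdx k) := by
  induction h generalizing k with
  | nil => simpa using Split.nil
  | cons he h ih =>
    cases k with
    | zero => simpa using h
    | succ k => simpa using Split.cons he (ih k)

theorem Split.append_right {Γ Γ₁ Γ₂ Δ : Ctx} (h : Split Γ Γ₁ Γ₂) (hΔ : ParaOnly Δ) :
    Split (Γ ++ Δ) (Γ₁ ++ Δ) (Γ₂ ++ Δ) := by
  induction h with
  | nil =>
    simp only [List.nil_append]
    induction Δ with
    | nil => exact .nil
    | cons e Δ ih =>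
      refine .cons ?_ (ih fun x hx => hΔ x (List.mem_cons_of_mem _ hx))
      rcases hΔ e List.mem_cons_self with rfl | rfl <;> constructor
  | cons he _ ih => exact .cons he ih

theorem BangCtx.length_eq {Γ Δ : Ctx} (h : BangCtx Γ Δ) : Γ.length = Δ.length := by
  induction h with
  | nil => rfl
  | cons _ _ ih => simp [ih]

theorem BangCtx.eraseIdx {Γ Δ : Ctx} (h : BangCtx Γ Δ) (k : ℕ) :
    BangCtx (Γ.eraseIdx k) (Δ.eraseIdx k) := by
  induction h generalizing k with
  | nil => simpa using BangCtx.nil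
  | cons he h ih =>
    cases k with
    | zero => simpa using h
    | succ k => simpa using BangCtx.cons he (ih k)

/-- Weakening of the box rule: §-marked variables of the conclusion are absent from the premise,
so the premise is extended by absent entries only. -/
theorem BangCtx.append_right {Γ Γ' Δ : Ctx} (h : BangCtx Γ Γ') (hΔ : ParaOnly Δ) :
    BangCtx (Γ ++ List.replicate Δ.length none) (Γ' ++ Δ) := by
  induction h with
  | nil =>
    simp only [List.nil_append]
    induction Δ with
    | nil => exact .nil
    | cons e Δ ih =>
      refine .cons ?_ (ih fun x hx => hΔ x (List.mem_cons_of_mem _ hx))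
      rcases hΔ e List.mem_cons_self with rfl | rfl <;> constructor
  | cons he _ ih => exact .cons he ih

/-! ### Closed values -/

theorem WfV.var_lt {Γ : Ctx} {x : ℕ} (h : WfV Γ (.var x)) : x < Γ.length := by
  induction x generalizing Γ with
  | zero => cases h <;> simp
  | succ x ih =>
    cases h with
    | varThere _ h => simpa using ih h

mutual
/-- Lifting at a cutoff beyond the context does nothing. -/
theorem liftV_closed {Γ : Ctx} {c : ℕ} (hc : Γ.length ≤ c) :
    ∀ V, WfV Γ V → liftV c V = V
  | .star, _ => by simp [liftV]
  | .var x, h => by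
    have := h.var_lt
    simp only [liftV]
    rw [if_pos (by omega)]
  | .lam P, h => by
    cases h with
    | lam h => rw [liftV, liftP_closed (by simpa using hc) P h]
  | .blam P, h => by
    cases h with
    | blamBang h => rw [liftV, liftP_closed (by simpa using hc) P h]
    | blamPara h => rw [liftV, liftP_closed (by simpa using hc) P h]
  | .bang V, h => by
    cases h with
    | bang hb h => rw [liftV, liftV_closed (by rw [hb.length_eq]; exact hc) V h]
theorem liftP_closed {Γ : Ctx} {c : ℕ} (hc : Γ.length ≤ c) :
    ∀ P, WfP Γ P → liftP c P = P
  | .nil, _ => by simp [liftP]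
  | .par P Q, h => by
    cases h with
    | par hs h1 h2 =>
      rw [liftP, liftP_closed (by rw [hs.length_eq.1]; exact hc) P h1,
        liftP_closed (by rw [hs.length_eq.2]; exact hc) Q h2]
  | .inp a P, h => by
    cases h with
    | inp h => rw [liftP, liftP_closed (by simpa using hc) P h]
  | .binp a P, h => by
    cases h with
    | binpBang h => rw [liftP, liftP_closed (by simpa using hc) P h]
    | binpPara h => rw [liftP, liftP_closed (by simpa using hc) P h]
  | .out a V P, h => by
    cases h with
    | out hs h1 h2 =>
      rw [liftP, liftV_closed (by rw [hs.length_eq.1]; exact hc) V h1,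
        liftP_closed (by rw [hs.length_eq.2]; exact hc) P h2]
  | .nu a P, h => by
    cases h with
    | nu h => rw [liftP, liftP_closed hc P h]
  | .app V W, h => by
    cases h with
    | app hs h1 h2 =>
      rw [liftP, liftV_closed (by rw [hs.length_eq.1]; exact hc) V h1,
        liftV_closed (by rw [hs.length_eq.2]; exact hc) W h2]
end

theorem WfV.var_weaken {Γ Δ : Ctx} {x : ℕ} (hΔ : ParaOnly Δ) (h : WfV Γ (.var x)) :
    WfV (Γ ++ Δ) (.var x) := by
  induction x generalizing Γ with
  | zero =>
    cases h with
    | varLin h => exact .varLin (h.append hΔ)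
    | varPara h => exact .varPara (h.append hΔ)
  | succ x ih =>
    cases h with
    | varThere he h => exact .varThere he (ih h)

mutual
theorem WfV.weaken : ∀ V {Γ Δ : Ctx}, ParaOnly Δ → WfV Γ V → WfV (Γ ++ Δ) V
  | .star, _, _, hΔ, h => by
    cases h with
    | star h => exact .star (h.append hΔ)
  | .var _, _, _, hΔ, h => h.var_weaken hΔ
  | .lam P, _, _, hΔ, h => by
    cases h with
    | lam h => exact .lam (WfP.weaken P hΔ h)
  | .blam P, _, _, hΔ, h => by
    cases h with
    | blamBang h => exact .blamBang (WfP.weaken P hΔ h)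
    | blamPara h => exact .blamPara (WfP.weaken P hΔ h)
  | .bang V, _, _, hΔ, h => by
    cases h with
    | bang hb h =>
      refine .bang (hb.append_right hΔ) (WfV.weaken V ?_ h)
      intro x hx
      exact .inl (List.eq_of_mem_replicate hx)
theorem WfP.weaken : ∀ P {Γ Δ : Ctx}, ParaOnly Δ → WfP Γ P → WfP (Γ ++ Δ) P
  | .nil, _, _, hΔ, h => by
    cases h with
    | nil h => exact .nil (h.append hΔ)
  | .par P Q, _, _, hΔ, h => by
    cases h with
    | par hs h1 h2 => exact .par (hs.append_right hΔ) (WfP.weaken P hΔ h1) (WfP.weaken Q hΔ h2)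
  | .inp a P, _, _, hΔ, h => by
    cases h with
    | inp h => exact .inp (WfP.weaken P hΔ h)
  | .binp a P, _, _, hΔ, h => by
    cases h with
    | binpBang h => exact .binpBang (WfP.weaken P hΔ h)
    | binpPara h => exact .binpPara (WfP.weaken P hΔ h)
  | .out a V P, _, _, hΔ, h => by
    cases h with
    | out hs h1 h2 => exact .out (hs.append_right hΔ) (WfV.weaken V hΔ h1) (WfP.weaken P hΔ h2)
  | .nu a P, _, _, hΔ, h => by
    cases h with
    | nu h => exact .nu (WfP.weaken P hΔ h)
  | .app V W, _, _, hΔ, h => by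
    cases h with
    | app hs h1 h2 => exact .app (hs.append_right hΔ) (WfV.weaken V hΔ h1) (WfV.weaken W hΔ h2)
end

/-! ### Substitution of a closed value -/

/-- Apart from the variable itself, the context of a variable is made of §-marked or absent entries. -/
theorem WfV.var_paraOnly {Γ : Ctx} {x : ℕ} (h : WfV Γ (.var x)) : ParaOnly (Γ.eraseIdx x) := by
  induction x generalizing Γ with
  | zero =>
    cases h with
    | varLin h => simpa using h
    | varPara h => simpa using h
  | succ x ih =>
    cases h with
    | varThere he h => simpa using (ih h).cons he

theorem WfV.var_erase_lt {Γ : Ctx} {x k : ℕ} (hx : x < k) (h : WfV Γ (.var x)) :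
    WfV (Γ.eraseIdx k) (.var x) := by
  induction x generalizing Γ k with
  | zero =>
    obtain ⟨k, rfl⟩ : ∃ j, k = j + 1 := ⟨k - 1, by omega⟩
    cases h with
    | varLin h => simpa using WfV.varLin (h.eraseIdx k)
    | varPara h => simpa using WfV.varPara (h.eraseIdx k)
  | succ x ih =>
    obtain ⟨k, rfl⟩ : ∃ j, k = j + 1 := ⟨k - 1, by omega⟩
    cases h with
    | varThere he h => simpa using WfV.varThere he (ih (by omega) h)

theorem WfV.var_erase_gt {Γ : Ctx} {x k : ℕ} (hx : k ≤ x) (h : WfV Γ (.var (x + 1))) :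
    WfV (Γ.eraseIdx k) (.var x) := by
  induction k generalizing Γ x with
  | zero =>
    cases h with
    | varThere _ h => simpa using h
  | succ k ih =>
    obtain ⟨x, rfl⟩ : ∃ j, x = j + 1 := ⟨x - 1, by omega⟩
    cases h with
    | varThere he h => simpa using WfV.varThere he (ih (by omega) h)

mutual
/-- Substitution lemma for values; see `WfP.subst`. -/
theorem WfV.subst {U : Val} (hU : WfV [] U) :
    ∀ V {Γ : Ctx} {k : ℕ}, WfV Γ V → WfV (Γ.eraseIdx k) (substV U k V)
  | .star, _, k, h => by
    cases h with
    | star h => exact .star (h.eraseIdx k)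
  | .var x, Γ, k, h => by
    simp only [substV]
    split_ifs with h1 h2
    · subst h1
      simpa using WfV.weaken U h.var_paraOnly hU
    · exact h.var_erase_lt h2
    · obtain ⟨y, rfl⟩ : ∃ j, x = j + 1 := ⟨x - 1, by omega⟩
      exact h.var_erase_gt (by omega)
  | .lam P, _, k, h => by
    cases h with
    | lam h =>
      rw [substV, liftV_closed (Nat.le_refl 0) U hU]
      exact .lam (by simpa using WfP.subst hU P (k := k + 1) h)
  | .blam P, _, k, h => by
    rw [substV, liftV_closed (Nat.le_refl 0) U hU]
    cases h with
    | blamBang h => exact .blamBang (by simpa using WfP.subst hU P (k := k + 1) h)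
    | blamPara h => exact .blamPara (by simpa using WfP.subst hU P (k := k + 1) h)
  | .bang V, _, k, h => by
    cases h with
    | bang hb h => exact .bang (hb.eraseIdx k) (WfV.subst hU V h)
/-- Substitution lemma: substituting a closed well-formed value for the variable `k`, whatever its
marker, yields a process that is well formed in the context with entry `k` removed. No bound on `k`
is needed: when `k` is beyond the context, both the removal and the substitution are trivial. -/
theorem WfP.subst {U : Val} (hU : WfV [] U) :
    ∀ P {Γ : Ctx} {k : ℕ}, WfP Γ P → WfP (Γ.eraseIdx k) (substP U k P)
  | .nil, _, k, h => by
    cases h with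
    | nil h => exact .nil (h.eraseIdx k)
  | .par P Q, _, k, h => by
    cases h with
    | par hs h1 h2 => exact .par (hs.eraseIdx k) (WfP.subst hU P h1) (WfP.subst hU Q h2)
  | .inp a P, _, k, h => by
    rw [substP, liftV_closed (Nat.le_refl 0) U hU]
    cases h with
    | inp h => exact .inp (by simpa using WfP.subst hU P (k := k + 1) h)
  | .binp a P, _, k, h => by
    rw [substP, liftV_closed (Nat.le_refl 0) U hU]
    cases h with
    | binpBang h => exact .binpBang (by simpa using WfP.subst hU P (k := k + 1) h)
    | binpPara h => exact .binpPara (by simpa using WfP.subst hU P (k := k + 1) h)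
  | .out a V P, _, k, h => by
    cases h with
    | out hs h1 h2 => exact .out (hs.eraseIdx k) (WfV.subst hU V h1) (WfP.subst hU P h2)
  | .nu a P, _, k, h => by
    cases h with
    | nu h => exact .nu (WfP.subst hU P h)
  | .app V W, _, k, h => by
    cases h with
    | app hs h1 h2 => exact .app (hs.eraseIdx k) (WfV.subst hU V h1) (WfV.subst hU W h2)
end

/-! ### Structural congruence -/

theorem wfP_par {Γ : Ctx} {P Q : Proc} :
    WfP Γ (.par P Q) ↔ ∃ Γ₁ Γ₂, Split Γ Γ₁ Γ₂ ∧ WfP Γ₁ P ∧ WfP Γ₂ Q :=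
  ⟨fun h => by cases h with | par hs h1 h2 => exact ⟨_, _, hs, h1, h2⟩,
    fun ⟨_, _, hs, h1, h2⟩ => .par hs h1 h2⟩

theorem wfP_out {Γ : Ctx} {a : ℕ} {V : Val} {P : Proc} :
    WfP Γ (.out a V P) ↔ ∃ Γ₁ Γ₂, Split Γ Γ₁ Γ₂ ∧ WfV Γ₁ V ∧ WfP Γ₂ P :=
  ⟨fun h => by cases h with | out hs h1 h2 => exact ⟨_, _, hs, h1, h2⟩,
    fun ⟨_, _, hs, h1, h2⟩ => .out hs h1 h2⟩

theorem wfP_app {Γ : Ctx} {V W : Val} :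
    WfP Γ (.app V W) ↔ ∃ Γ₁ Γ₂, Split Γ Γ₁ Γ₂ ∧ WfV Γ₁ V ∧ WfV Γ₂ W :=
  ⟨fun h => by cases h with | app hs h1 h2 => exact ⟨_, _, hs, h1, h2⟩,
    fun ⟨_, _, hs, h1, h2⟩ => .app hs h1 h2⟩

theorem wfP_inp {Γ : Ctx} {a : ℕ} {P : Proc} :
    WfP Γ (.inp a P) ↔ WfP (some .lin :: Γ) P :=
  ⟨fun h => by cases h with | inp h => exact h, .inp⟩

theorem wfP_binp {Γ : Ctx} {a : ℕ} {P : Proc} :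
    WfP Γ (.binp a P) ↔ WfP (some .bang :: Γ) P ∨ WfP (some .para :: Γ) P :=
  ⟨fun h => by
    cases h with
    | binpBang h => exact .inl h
    | binpPara h => exact .inr h,
    fun h => h.elim .binpBang .binpPara⟩

theorem wfP_nu {Γ : Ctx} {a : ℕ} {P : Proc} : WfP Γ (.nu a P) ↔ WfP Γ P :=
  ⟨fun h => by cases h with | nu h => exact h, .nu⟩

theorem wfV_lam {Γ : Ctx} {P : Proc} : WfV Γ (.lam P) ↔ WfP (some .lin :: Γ) P :=
  ⟨fun h => by cases h with | lam h => exact h, .lam⟩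

theorem wfV_blam {Γ : Ctx} {P : Proc} :
    WfV Γ (.blam P) ↔ WfP (some .bang :: Γ) P ∨ WfP (some .para :: Γ) P :=
  ⟨fun h => by
    cases h with
    | blamBang h => exact .inl h
    | blamPara h => exact .inr h,
    fun h => h.elim .blamBang .blamPara⟩

theorem wfV_bang {Γ : Ctx} {V : Val} : WfV Γ (.bang V) ↔ ∃ Δ, BangCtx Δ Γ ∧ WfV Δ V :=
  ⟨fun h => by cases h with | bang hb h => exact ⟨_, hb, h⟩, fun ⟨_, hb, h⟩ => .bang hb h⟩

mutual
theorem wfV_ch (a b : ℕ) : ∀ V (Γ : Ctx), WfV Γ (chV a b V) ↔ WfV Γ V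
  | .star, _ => by rw [chV]
  | .var _, _ => by rw [chV]
  | .lam P, _ => by rw [chV, wfV_lam, wfV_lam, wfP_ch a b P]
  | .blam P, _ => by rw [chV, wfV_blam, wfV_blam, wfP_ch a b P, wfP_ch a b P]
  | .bang V, _ => by
    rw [chV, wfV_bang, wfV_bang]
    simp only [wfV_ch a b V]
/-- Well-formation is insensitive to the renaming of channels, capturing or not. -/
theorem wfP_ch (a b : ℕ) : ∀ P (Γ : Ctx), WfP Γ (chP a b P) ↔ WfP Γ P
  | .nil, _ => by rw [chP]
  | .par P Q, _ => by
    rw [chP, wfP_par, wfP_par]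
    simp only [wfP_ch a b P, wfP_ch a b Q]
  | .inp c P, _ => by rw [chP, wfP_inp, wfP_inp, wfP_ch a b P]
  | .binp c P, _ => by rw [chP, wfP_binp, wfP_binp, wfP_ch a b P, wfP_ch a b P]
  | .out c V P, _ => by
    rw [chP, wfP_out, wfP_out]
    simp only [wfV_ch a b V, wfP_ch a b P]
  | .nu c P, _ => by
    rw [chP]
    split_ifs
    · exact Iff.rfl
    · rw [wfP_nu, wfP_nu, wfP_ch a b P]
  | .app V W, _ => by
    rw [chP, wfP_app, wfP_app]
    simp only [wfV_ch a b V, wfV_ch a b W]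
end

theorem wfP_par_comm {Γ : Ctx} {P Q : Proc} (h : WfP Γ (.par P Q)) : WfP Γ (.par Q P) := by
  cases h with
  | par hs h1 h2 => exact .par hs.comm h2 h1

theorem wfP_par_assoc {Γ : Ctx} {P Q R : Proc} (h : WfP Γ (.par P (.par Q R))) :
    WfP Γ (.par (.par P Q) R) := by
  cases h with
  | par hs h1 h2 =>
    cases h2 with
    | par hs' h2 h3 =>
      obtain ⟨Δ, h4, h5⟩ := hs.assoc hs'
      exact .par h4 (.par h5 h1 h2) h3

mutual
theorem SCV.wf_iff : ∀ {V W : Val}, SCV V W → ∀ Γ : Ctx, WfV Γ V ↔ WfV Γ W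
  | _, _, .refl _, _ => Iff.rfl
  | _, _, .symm h, Γ => (SCV.wf_iff h Γ).symm
  | _, _, .trans h h', Γ => (SCV.wf_iff h Γ).trans (SCV.wf_iff h' Γ)
  | _, _, .lam h, Γ => by rw [wfV_lam, wfV_lam, SCP.wf_iff h]
  | _, _, .blam h, Γ => by rw [wfV_blam, wfV_blam, SCP.wf_iff h, SCP.wf_iff h]
  | _, _, .bang h, Γ => by
    rw [wfV_bang, wfV_bang]
    simp only [SCV.wf_iff h]
/-- Structurally congruent processes are well formed in the same contexts. -/
theorem SCP.wf_iff : ∀ {P Q : Proc}, SCP P Q → ∀ Γ : Ctx, WfP Γ P ↔ WfP Γ Q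
  | _, _, .refl _, _ => Iff.rfl
  | _, _, .symm h, Γ => (SCP.wf_iff h Γ).symm
  | _, _, .trans h h', Γ => (SCP.wf_iff h Γ).trans (SCP.wf_iff h' Γ)
  | _, _, .par h h', Γ => by
    rw [wfP_par, wfP_par]
    simp only [SCP.wf_iff h, SCP.wf_iff h']
  | _, _, .inp h, Γ => by rw [wfP_inp, wfP_inp, SCP.wf_iff h]
  | _, _, .binp h, Γ => by rw [wfP_binp, wfP_binp, SCP.wf_iff h, SCP.wf_iff h]
  | _, _, .out h h', Γ => by
    rw [wfP_out, wfP_out]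
    simp only [SCV.wf_iff h, SCP.wf_iff h']
  | _, _, .nu h, Γ => by rw [wfP_nu, wfP_nu, SCP.wf_iff h]
  | _, _, .app h h', Γ => by
    rw [wfP_app, wfP_app]
    simp only [SCV.wf_iff h, SCV.wf_iff h']
  | _, _, .assoc, _ =>
    -- The converse of associativity is obtained from the direct one and commutativity.
    ⟨wfP_par_assoc, fun h =>
      wfP_par_comm (wfP_par_assoc (wfP_par_comm (wfP_par_assoc (wfP_par_comm h))))⟩
  | _, _, .comm, _ => ⟨wfP_par_comm, wfP_par_comm⟩
  | _, _, .nuswap, _ => by simp only [wfP_nu]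
  | _, _, .extrude _, _ => by
    rw [wfP_nu, wfP_par, wfP_par]
    simp only [wfP_nu]
  | _, _, .alpha _, _ => by rw [wfP_nu, wfP_nu, wfP_ch]
end

/-! ### Subject reduction -/

theorem WfV.of_bang_nil {V : Val} (h : WfV [] (.bang V)) : WfV [] V := by
  cases h with
  | bang hb h =>
    cases hb
    exact h

theorem WfP.subst_zero {e : Option SMark} {U : Val} {P : Proc} (hU : WfV [] U)
    (h : WfP [e] P) : WfP [] (substP U 0 P) := by
  simpa using WfP.subst hU P (k := 0) h

theorem wfP_par_nil {P Q : Proc} : WfP [] (.par P Q) ↔ WfP [] P ∧ WfP [] Q := by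
  refine ⟨fun h => ?_, fun h => .par .nil h.1 h.2⟩
  cases h with
  | par hs h1 h2 =>
    cases hs
    exact ⟨h1, h2⟩

theorem wfP_out_nil {a : ℕ} {V : Val} {P : Proc} (h : WfP [] (.out a V P)) :
    WfV [] V ∧ WfP [] P := by
  cases h with
  | out hs h1 h2 =>
    cases hs
    exact ⟨h1, h2⟩

theorem wfP_app_nil {V W : Val} (h : WfP [] (.app V W)) : WfV [] V ∧ WfV [] W := by
  cases h with
  | app hs h1 h2 =>
    cases hs
    exact ⟨h1, h2⟩

/-- Subject reduction for SHOπ: well-formedness in the empty context is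
preserved by reduction. -/
theorem shopi_subject_reduction {P Q : Proc} (h : WfP [] P) (r : Red P Q) :
    WfP [] Q := by
  induction r with
  | comm =>
    obtain ⟨ho, hi⟩ := wfP_par_nil.1 h
    obtain ⟨hV, hP⟩ := wfP_out_nil ho
    exact wfP_par_nil.2 ⟨hP, (wfP_inp.1 hi).subst_zero hV⟩
  | bcomm =>
    obtain ⟨ho, hi⟩ := wfP_par_nil.1 h
    obtain ⟨hV, hP⟩ := wfP_out_nil ho
    exact wfP_par_nil.2 ⟨hP, (wfP_binp.1 hi).elim (WfP.subst_zero hV.of_bang_nil)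
      (WfP.subst_zero hV.of_bang_nil)⟩
  | beta =>
    obtain ⟨hl, hV⟩ := wfP_app_nil h
    exact (wfV_lam.1 hl).subst_zero hV
  | bbeta =>
    obtain ⟨hl, hV⟩ := wfP_app_nil h
    exact (wfV_blam.1 hl).elim (WfP.subst_zero hV.of_bang_nil) (WfP.subst_zero hV.of_bang_nil)
  | parL _ ih =>
    obtain ⟨h1, h2⟩ := wfP_par_nil.1 h
    exact wfP_par_nil.2 ⟨ih h1, h2⟩
  | res _ ih => exact .nu (ih (wfP_nu.1 h))
  | struct hs _ hs' ih => exact (hs'.wf_iff []).1 (ih ((hs.wf_iff []).1 h))
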